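/- (Lemma 3.3, full Euler case.) Let (ρ,u,s) be a classical solution of the full compressible Euler equations on ℝⁿ × [0,T] satisfying the decay, integrability and entropy conditions. If 1 < γ ≤ 1 + 2/n, then for all t ∈ [0,T]: (n(γ−1)/2) E(0) t² + F(0) t + G(0) ≤ G(t) ≤ E(0) t² + F(0) t + G(0). If γ > 1 + 2/n, then for all t ∈ [0,T]: E(0) t² + F(0) t + G(0) ≤ G(t) ≤ (n(γ−1)/2) E(0) t² + F(0) t + G(0). -/

import Mathlib

open MeasureTheory Filter
open scoped InnerProductSpace

noncomputable section

/-- A classical solution of the full compressible Euler equations for a polytropic gas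
with pressure `p = exp(s/c_ν) ρ^γ`:
`∂ₜρ + div(ρu) = 0`, `∂ₜ(ρuᵢ) + div(ρuᵢu) + ∂ᵢp = 0`,
`∂ₜ((1/2)ρ|u|² + p/(γ−1)) + div(((1/2)ρ|u|² + γp/(γ−1))u) = 0` on `ℝⁿ × [0,T]`,
together with the decay conditions (9-25), the entropy lower bound `s ≥ s₁`, the
integrability conditions on the physical quantities, and differentiability of these
quantities with derivatives computed by differentiating under the integral sign. -/
structure FullEulerSolution (n : ℕ) (γ cν s₁ T : ℝ) where
  ρ : ℝ → EuclideanSpace ℝ (Fin n) → ℝ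
  u : ℝ → EuclideanSpace ℝ (Fin n) → EuclideanSpace ℝ (Fin n)
  s : ℝ → EuclideanSpace ℝ (Fin n) → ℝ
  ρ_nonneg : ∀ t ∈ Set.Icc 0 T, ∀ x, 0 ≤ ρ t x
  /-- the entropy condition: `s(x,t) ≥ s₁ = min_x s(x,0)`. -/
  entropy_lb : ∀ t ∈ Set.Icc 0 T, ∀ x, s₁ ≤ s t x
  smooth_ρ : ContDiffOn ℝ 1 (fun p : ℝ × EuclideanSpace ℝ (Fin n) => ρ p.1 p.2)
    (Set.Icc 0 T ×ˢ Set.univ)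
  smooth_u : ContDiffOn ℝ 1 (fun p : ℝ × EuclideanSpace ℝ (Fin n) => u p.1 p.2)
    (Set.Icc 0 T ×ˢ Set.univ)
  smooth_s : ContDiffOn ℝ 1 (fun p : ℝ × EuclideanSpace ℝ (Fin n) => s p.1 p.2)
    (Set.Icc 0 T ×ˢ Set.univ)
  /-- Conservation of mass: `∂ₜρ + div(ρu) = 0`. -/
  mass_eq : ∀ t ∈ Set.Icc 0 T, ∀ x,
    deriv (fun τ => ρ τ x) t
      + ∑ i : Fin n, fderiv ℝ (fun y => ρ t y * u t y i) x (EuclideanSpace.single i 1) = 0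
  /-- Conservation of momentum: `∂ₜ(ρuᵢ) + div(ρuᵢu) + ∂ᵢp = 0`. -/
  momentum_eq : ∀ t ∈ Set.Icc 0 T, ∀ x, ∀ i : Fin n,
    deriv (fun τ => ρ τ x * u τ x i) t
      + ∑ j : Fin n, fderiv ℝ (fun y => ρ t y * u t y i * u t y j) x (EuclideanSpace.single j 1)
      + fderiv ℝ (fun y => Real.exp (s t y / cν) * ρ t y ^ γ) x (EuclideanSpace.single i 1)
      = 0
  /-- Conservation of energy:
  `∂ₜ((1/2)ρ|u|² + p/(γ−1)) + div(((1/2)ρ|u|² + γp/(γ−1))u) = 0`. -/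
  energy_eq : ∀ t ∈ Set.Icc 0 T, ∀ x,
    deriv (fun τ => (1 / 2 : ℝ) * ρ τ x * ‖u τ x‖ ^ 2
        + Real.exp (s τ x / cν) * ρ τ x ^ γ / (γ - 1)) t
      + ∑ i : Fin n, fderiv ℝ (fun y => ((1 / 2 : ℝ) * ρ t y * ‖u t y‖ ^ 2
          + γ * (Real.exp (s t y / cν) * ρ t y ^ γ) / (γ - 1)) * u t y i) x
          (EuclideanSpace.single i 1) = 0
  /-- decay: `|u| → 0` as `|x| → ∞`. -/
  decay_u : ∀ t ∈ Set.Icc 0 T,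
    Tendsto (fun x => ‖u t x‖) (Bornology.cobounded _) (nhds 0)
  /-- decay: `ρ|u| = o(|x|^{-(n+1)})`. -/
  decay_ρu : ∀ t ∈ Set.Icc 0 T,
    Tendsto (fun x => ‖x‖ ^ (n + 1) * (ρ t x * ‖u t x‖)) (Bornology.cobounded _) (nhds 0)
  /-- decay: `|∇ₓu| = o(|x|^{-n})`. -/
  decay_gradu : ∀ t ∈ Set.Icc 0 T,
    Tendsto (fun x => ‖x‖ ^ n * ‖fderiv ℝ (u t) x‖) (Bornology.cobounded _) (nhds 0)
  /-- decay: the pressure `p = o(|x|^{-n})`. -/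
  decay_p : ∀ t ∈ Set.Icc 0 T,
    Tendsto (fun x => ‖x‖ ^ n * (Real.exp (s t x / cν) * ρ t x ^ γ))
      (Bornology.cobounded _) (nhds 0)
  int_ρ : ∀ t ∈ Set.Icc 0 T, Integrable (ρ t)
  int_ρu : ∀ t ∈ Set.Icc 0 T, Integrable (fun x => ρ t x * ‖u t x‖)
  int_ρu2 : ∀ t ∈ Set.Icc 0 T, Integrable (fun x => ρ t x * ‖u t x‖ ^ 2)
  int_ρx2 : ∀ t ∈ Set.Icc 0 T, Integrable (fun x => ρ t x * ‖x‖ ^ 2)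
  int_ρux : ∀ t ∈ Set.Icc 0 T, Integrable (fun x => ρ t x * ‖u t x‖ * ‖x‖)
  int_p : ∀ t ∈ Set.Icc 0 T, Integrable (fun x => Real.exp (s t x / cν) * ρ t x ^ γ)
  /-- `M(t) = ∫ρ` is differentiable, by differentiation under the integral sign. -/
  hM : ∀ t ∈ Set.Icc 0 T,
    HasDerivAt (fun τ => ∫ x, ρ τ x) (∫ x, deriv (fun τ => ρ τ x) t) t
  /-- `ℙ(t) = ∫ρu` is differentiable, by differentiation under the integral sign. -/
  hP : ∀ t ∈ Set.Icc 0 T,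
    HasDerivAt (fun τ => ∫ x, ρ τ x • u τ x) (∫ x, deriv (fun τ => ρ τ x • u τ x) t) t
  /-- `F(t) = ∫ρ u·x` is differentiable, by differentiation under the integral sign. -/
  hF : ∀ t ∈ Set.Icc 0 T,
    HasDerivAt (fun τ => ∫ x, ρ τ x * ⟪u τ x, x⟫_ℝ)
      (∫ x, deriv (fun τ => ρ τ x * ⟪u τ x, x⟫_ℝ) t) t
  /-- `G(t) = (1/2)∫ρ|x|²` is differentiable, by differentiation under the integral sign. -/
  hG : ∀ t ∈ Set.Icc 0 T,
    HasDerivAt (fun τ => (1 / 2 : ℝ) * ∫ x, ρ τ x * ‖x‖ ^ 2)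
      ((1 / 2 : ℝ) * ∫ x, deriv (fun τ => ρ τ x * ‖x‖ ^ 2) t) t
  /-- `E(t) = E_k(t) + E_i(t)` is differentiable, by differentiation under the integral
  sign. -/
  hE : ∀ t ∈ Set.Icc 0 T,
    HasDerivAt (fun τ => ∫ x, ((1 / 2 : ℝ) * ρ τ x * ‖u τ x‖ ^ 2
        + Real.exp (s τ x / cν) * ρ τ x ^ γ / (γ - 1)))
      (∫ x, deriv (fun τ => (1 / 2 : ℝ) * ρ τ x * ‖u τ x‖ ^ 2
        + Real.exp (s τ x / cν) * ρ τ x ^ γ / (γ - 1)) t) t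

namespace FullEulerSolution

variable {n : ℕ} {γ cν s₁ T : ℝ}

/-- The mass `M(t) = ∫ ρ dx`. -/
def M (S : FullEulerSolution n γ cν s₁ T) (t : ℝ) : ℝ := ∫ x, S.ρ t x

/-- The momentum `ℙ(t) = ∫ ρ u dx`. -/
def P (S : FullEulerSolution n γ cν s₁ T) (t : ℝ) : EuclideanSpace ℝ (Fin n) :=
  ∫ x, S.ρ t x • S.u t x

/-- The momentum weight `F(t) = ∫ ρ u·x dx`. -/
def F (S : FullEulerSolution n γ cν s₁ T) (t : ℝ) : ℝ := ∫ x, S.ρ t x * ⟪S.u t x, x⟫_ℝ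

/-- The momentum of inertia `G(t) = (1/2) ∫ ρ |x|² dx`. -/
def G (S : FullEulerSolution n γ cν s₁ T) (t : ℝ) : ℝ :=
  (1 / 2 : ℝ) * ∫ x, S.ρ t x * ‖x‖ ^ 2

/-- The kinetic energy `E_k(t) = (1/2) ∫ ρ |u|² dx`. -/
def Ek (S : FullEulerSolution n γ cν s₁ T) (t : ℝ) : ℝ :=
  (1 / 2 : ℝ) * ∫ x, S.ρ t x * ‖S.u t x‖ ^ 2

/-- The internal energy `E_i(t) = (1/(γ−1)) ∫ p dx` with `p = exp(s/c_ν) ρ^γ`. -/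
def Ei (S : FullEulerSolution n γ cν s₁ T) (t : ℝ) : ℝ :=
  (1 / (γ - 1)) * ∫ x, Real.exp (S.s t x / cν) * S.ρ t x ^ γ

/-- The total energy `E(t) = E_k(t) + E_i(t)`. -/
def E (S : FullEulerSolution n γ cν s₁ T) (t : ℝ) : ℝ := S.Ek t + S.Ei t

/-- The functional `J(t) = G(t) − (t+1)F(t) + (t+1)² E(t)`. -/
def J (S : FullEulerSolution n γ cν s₁ T) (t : ℝ) : ℝ :=
  S.G t - (t + 1) * S.F t + (t + 1) ^ 2 * S.E t

end FullEulerSolution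

section Auxiliary

open Set

variable {n : ℕ}

/-- A sequence of compactly supported `C¹` cutoffs exhausting `ℝⁿ`, whose gradients are bounded by
`K` and by `K / ‖x‖`. -/
lemma exists_cutoff_seq (n : ℕ) :
    ∃ (φ : ℕ → EuclideanSpace ℝ (Fin n) → ℝ) (K : ℝ), 0 ≤ K ∧ (∀ N, ContDiff ℝ 1 (φ N)) ∧
      (∀ N, HasCompactSupport (φ N)) ∧ (∀ N x, |φ N x| ≤ 1) ∧
      (∀ N x, ‖fderiv ℝ (φ N) x‖ ≤ K) ∧ (∀ N x, ‖x‖ * ‖fderiv ℝ (φ N) x‖ ≤ K) ∧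
      ∀ x, ∀ᶠ N in atTop, φ N x = 1 ∧ fderiv ℝ (φ N) x = 0 := by
  let χ : ContDiffBump (0 : EuclideanSpace ℝ (Fin n)) := ⟨1, 2, one_pos, one_lt_two⟩
  have hχ : ContDiff ℝ 1 χ := χ.contDiff
  have hχc : HasCompactSupport (fderiv ℝ χ) := χ.hasCompactSupport.fderiv ℝ
  have hcont : Continuous (fderiv ℝ χ) := hχ.continuous_fderiv one_ne_zero
  obtain ⟨K₁, hK₁⟩ := hcont.bounded_above_of_compact_support hχc
  obtain ⟨K₂, hK₂⟩ := (continuous_norm.smul hcont).bounded_above_of_compact_support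
    (hχc.smul_left (f := fun x : EuclideanSpace ℝ (Fin n) => ‖x‖))
  have hscale : ∀ (N : ℕ) (x : EuclideanSpace ℝ (Fin n)),
      fderiv ℝ (fun y => χ (((N : ℝ) + 1)⁻¹ • y)) x
        = ((N : ℝ) + 1)⁻¹ • fderiv ℝ χ (((N : ℝ) + 1)⁻¹ • x) := fun N x => by
    simpa using fderiv_comp_smul (f := χ) (x := x) (((N : ℝ) + 1)⁻¹)
  have hpos : ∀ N : ℕ, (0 : ℝ) < ((N : ℝ) + 1)⁻¹ := fun N => by positivity
  have hle : ∀ N : ℕ, ((N : ℝ) + 1)⁻¹ ≤ 1 := fun N => inv_le_one_of_one_le₀ (by simp)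
  refine ⟨fun N x => χ (((N : ℝ) + 1)⁻¹ • x), max K₁ K₂, ?_, ?_, ?_, ?_, ?_, ?_, ?_⟩
  · exact le_max_of_le_left ((norm_nonneg _).trans (hK₁ 0))
  · exact fun N => hχ.comp (contDiff_const_smul _)
  · exact fun N => χ.hasCompactSupport.comp_smul (hpos N).ne'
  · exact fun N x => abs_le.2 ⟨by linarith [χ.nonneg' (((N : ℝ) + 1)⁻¹ • x)], χ.le_one⟩
  · intro N x
    rw [hscale, norm_smul, Real.norm_of_nonneg (hpos N).le]
    refine le_max_of_le_left (le_trans ?_ (hK₁ (((N : ℝ) + 1)⁻¹ • x)))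
    exact mul_le_of_le_one_left (norm_nonneg _) (hle N)
  · intro N x
    refine le_max_of_le_right (le_trans (le_of_eq ?_) (hK₂ (((N : ℝ) + 1)⁻¹ • x)))
    rw [hscale]
    simp only [norm_smul, Real.norm_of_nonneg (hpos N).le, norm_norm, Pi.smul_apply', norm_mul]
    ring
  · intro x
    obtain ⟨m, hm⟩ := exists_nat_gt ‖x‖
    filter_upwards [eventually_ge_atTop m] with N hN
    have hx : ((N : ℝ) + 1)⁻¹ • x ∈ Metric.ball (0 : EuclideanSpace ℝ (Fin n)) χ.rIn := by
      rw [mem_ball_zero_iff, norm_smul, Real.norm_of_nonneg (hpos N).le,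
        inv_mul_lt_iff₀ (by positivity)]
      have : (m : ℝ) ≤ N := by exact_mod_cast hN
      change ‖x‖ < ((N : ℝ) + 1) * 1
      linarith
    refine ⟨χ.one_of_mem_closedBall (Metric.ball_subset_closedBall hx), ?_⟩
    rw [hscale, (χ.eventuallyEq_one_of_mem_ball hx).fderiv_eq]
    simp

/-- Integration by parts of a divergence against a compactly supported test function. -/
lemma integral_mul_divergence {φ : EuclideanSpace ℝ (Fin n) → ℝ}
    {V : EuclideanSpace ℝ (Fin n) → EuclideanSpace ℝ (Fin n)} (hφ : ContDiff ℝ 1 φ)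
    (hφc : HasCompactSupport φ) (hV : ContDiff ℝ 1 V) :
    ∫ x, φ x * ∑ i, fderiv ℝ (fun y => V y i) x (EuclideanSpace.single i 1)
      = -∫ x, fderiv ℝ φ x (V x) := by
  have hVi : ∀ i, ContDiff ℝ 1 (fun y => V y i) := fun i => by fun_prop
  have hc : ∀ v, Continuous (fun x => fderiv ℝ φ x v) := fun v =>
    (hφ.continuous_fderiv one_ne_zero).clm_apply continuous_const
  have hcV : ∀ i v, Continuous (fun x => fderiv ℝ (fun y => V y i) x v) := fun i v =>
    ((hVi i).continuous_fderiv one_ne_zero).clm_apply continuous_const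
  have h1 : ∀ i, Integrable (fun x => φ x * fderiv ℝ (fun y => V y i) x
      (EuclideanSpace.single i 1)) := fun i =>
    (hφ.continuous.mul (hcV i _)).integrable_of_hasCompactSupport hφc.mul_right
  have h2 : ∀ i, Integrable (fun x => fderiv ℝ φ x (EuclideanSpace.single i 1) * V x i) :=
    fun i => ((hc _).mul (hVi i).continuous).integrable_of_hasCompactSupport
      (hφc.fderiv_apply ℝ _).mul_right
  have h3 : ∀ i, Integrable (fun x => φ x * V x i) := fun i =>
    (hφ.continuous.mul (hVi i).continuous).integrable_of_hasCompactSupport hφc.mul_right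
  have hexp : ∀ x, fderiv ℝ φ x (V x)
      = ∑ i, fderiv ℝ φ x (EuclideanSpace.single i 1) * V x i := fun x => by
    conv_lhs => rw [← (EuclideanSpace.basisFun (Fin n) ℝ).sum_repr (V x)]
    simp [map_sum, mul_comm]
  simp_rw [hexp, Finset.mul_sum]
  rw [integral_finsetSum _ fun i _ => h1 i, integral_finsetSum _ fun i _ => h2 i,
    ← Finset.sum_neg_distrib]
  exact Finset.sum_congr rfl fun i _ =>
    integral_mul_fderiv_eq_neg_fderiv_mul_of_integrable (h2 i) (h1 i) (h3 i)
      (fun x _ => hφ.differentiable one_ne_zero x)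
      (fun x _ => (hVi i).differentiable one_ne_zero x)

/-- Differentiation under the integral sign against a compactly supported weight. -/
lemma hasDerivAt_integral_mul_of_contDiffOn {φ : EuclideanSpace ℝ (Fin n) → ℝ}
    {q : ℝ → EuclideanSpace ℝ (Fin n) → ℝ} {T t : ℝ} (hφ : Continuous φ)
    (hφc : HasCompactSupport φ)
    (hq : ContDiffOn ℝ 1 (fun p : ℝ × EuclideanSpace ℝ (Fin n) => q p.1 p.2) (Icc 0 T ×ˢ univ))
    (ht : t ∈ Ioo 0 T) :
    HasDerivAt (fun τ => ∫ x, φ x * q τ x) (∫ x, φ x * deriv (fun τ => q τ x) t) t := by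
  set Q : ℝ × EuclideanSpace ℝ (Fin n) → ℝ := fun p => q p.1 p.2 with hQ
  have hopen : IsOpen (Ioo 0 T ×ˢ (univ : Set (EuclideanSpace ℝ (Fin n)))) :=
    isOpen_Ioo.prod isOpen_univ
  have hq' : ContDiffOn ℝ 1 Q (Ioo 0 T ×ˢ univ) :=
    hq.mono (prod_mono Ioo_subset_Icc_self subset_rfl)
  have hder : ∀ τ ∈ Ioo 0 T, ∀ x,
      HasDerivAt (fun r => q r x) (fderiv ℝ Q (τ, x) ((1 : ℝ), 0)) τ := fun τ hτ x => by
    have hd : HasFDerivAt Q (fderiv ℝ Q (τ, x)) (τ, x) :=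
      ((hq'.contDiffAt (hopen.mem_nhds ⟨hτ, mem_univ x⟩)).differentiableAt
        one_ne_zero).hasFDerivAt
    exact hd.comp_hasDerivAt τ ((hasDerivAt_id τ).prodMk (hasDerivAt_const τ x))
  have hcont : ContinuousOn (fun p : ℝ × EuclideanSpace ℝ (Fin n) =>
      φ p.2 * fderiv ℝ Q p ((1 : ℝ), 0)) (Ioo 0 T ×ˢ univ) :=
    (hφ.comp continuous_snd).continuousOn.mul
      ((hq'.continuousOn_fderiv_of_isOpen hopen le_rfl).clm_apply continuousOn_const)
  have hqc : ∀ τ ∈ Ioo 0 T, Continuous (q τ) := fun τ hτ =>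
    hq'.continuousOn.comp_continuous (Continuous.prodMk_right τ) fun x => ⟨hτ, mem_univ x⟩
  obtain ⟨a, ha0, hat⟩ := exists_between ht.1
  obtain ⟨b, htb, hbT⟩ := exists_between ht.2
  have hsub : Icc a b ⊆ Ioo 0 T := fun τ hτ => ⟨ha0.trans_le hτ.1, hτ.2.trans_lt hbT⟩
  obtain ⟨C, hC⟩ := (isCompact_Icc.prod hφc).exists_bound_of_continuousOn
    (hcont.mono (prod_mono hsub (subset_univ (tsupport φ))))
  have key := hasDerivAt_integral_of_dominated_loc_of_deriv_le (μ := volume) (x₀ := t)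
    (F := fun τ x => φ x * q τ x) (F' := fun τ x => φ x * fderiv ℝ Q (τ, x) ((1 : ℝ), 0))
    (bound := (tsupport φ).indicator fun _ => C) (Icc_mem_nhds hat htb)
    (by
      filter_upwards [Ioo_mem_nhds ht.1 ht.2] with τ hτ
      exact (hφ.mul (hqc τ hτ)).aestronglyMeasurable)
    ((hφ.mul (hqc t ht)).integrable_of_hasCompactSupport hφc.mul_right)
    (hcont.comp_continuous (Continuous.prodMk_right t)
      fun x => ⟨ht, mem_univ x⟩).aestronglyMeasurable
    (by
      refine ae_of_all _ fun x τ hτ => ?_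
      by_cases hx : x ∈ tsupport φ
      · simpa [hx] using hC (τ, x) ⟨hτ, hx⟩
      · simp [hx, image_eq_zero_of_notMem_tsupport hx])
    ((integrable_indicator_iff hφc.measurableSet).2 (integrableOn_const hφc.measure_ne_top))
    (ae_of_all _ fun x τ hτ => (hder τ (hsub hτ) x).const_mul _)
  simpa only [(hder t ht _).deriv] using key.2

/-- If `f_N → f` pointwise on `[0, T]`, with uniformly bounded derivatives converging pointwise
to `g` on `(0, T)`, then `f` is a primitive of `g`. -/
lemma sub_eq_integral_of_tendsto_of_hasDerivAt {f g : ℕ → ℝ → ℝ} {F G : ℝ → ℝ} {T C t : ℝ}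
    (hc : ∀ N, ContinuousOn (f N) (Icc 0 T))
    (hd : ∀ N, ∀ τ ∈ Ioo 0 T, HasDerivAt (f N) (g N τ) τ)
    (hb : ∀ N, ∀ τ ∈ Ioo 0 T, |g N τ| ≤ C)
    (hf : ∀ τ ∈ Icc 0 T, Tendsto (fun N => f N τ) atTop (nhds (F τ)))
    (hg : ∀ τ ∈ Ioo 0 T, Tendsto (fun N => g N τ) atTop (nhds (G τ)))
    (ht : t ∈ Icc 0 T) :
    IntervalIntegrable G volume 0 t ∧ F t - F 0 = ∫ τ in (0 : ℝ)..t, G τ := by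
  have hsub : Ioo 0 t ⊆ Ioo 0 T := Ioo_subset_Ioo_right ht.2
  have hae : ∀ᵐ τ ∂(volume : Measure ℝ), τ ∈ uIoc 0 t → τ ∈ Ioo 0 t := by
    filter_upwards [Measure.ae_ne volume t] with τ hτ h
    rw [uIoc_of_le ht.1] at h
    exact ⟨h.1, lt_of_le_of_ne h.2 hτ⟩
  have hae' : ∀ᵐ τ ∂(volume.restrict (uIoc 0 t)), τ ∈ Ioo 0 t :=
    (ae_restrict_iff' measurableSet_uIoc).2 hae
  have hmeas : ∀ N, AEStronglyMeasurable (g N) (volume.restrict (uIoc 0 t)) := fun N =>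
    (measurable_deriv (f N)).aestronglyMeasurable.congr
      (hae'.mono fun τ hτ => (hd N τ (hsub hτ)).deriv)
  have hGmeas : AEStronglyMeasurable G (volume.restrict (uIoc 0 t)) :=
    aestronglyMeasurable_of_tendsto_ae atTop hmeas (hae'.mono fun τ hτ => hg τ (hsub hτ))
  have hint : ∀ N, IntervalIntegrable (g N) volume 0 t := fun N =>
    (intervalIntegrable_const (c := C)).mono_fun' (hmeas N)
      (hae'.mono fun τ hτ => hb N τ (hsub hτ))
  have hGint : IntervalIntegrable G volume 0 t :=
    (intervalIntegrable_const (c := C)).mono_fun' hGmeas (hae'.mono fun τ hτ =>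
      le_of_tendsto (hg τ (hsub hτ)).norm (Eventually.of_forall fun N => hb N τ (hsub hτ)))
  refine ⟨hGint, tendsto_nhds_unique ((hf t ht).sub (hf 0 ⟨le_rfl, ht.1.trans ht.2⟩)) ?_⟩
  have hftc : ∀ N, f N t - f N 0 = ∫ τ in (0 : ℝ)..t, g N τ := fun N =>
    (intervalIntegral.integral_eq_sub_of_hasDerivAt_of_le ht.1
      ((hc N).mono (Icc_subset_Icc_right ht.2)) (fun τ hτ => hd N τ (hsub hτ)) (hint N)).symm
  simp_rw [hftc]
  exact intervalIntegral.tendsto_integral_filter_of_dominated_convergence (fun _ => C)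
    (Eventually.of_forall hmeas)
    (Eventually.of_forall fun N => hae.mono fun τ h hτ => hb N τ (hsub (h hτ)))
    intervalIntegrable_const (hae.mono fun τ h hτ => hg τ (hsub (h hτ)))

/-- An integrable `C¹` vector field with integrable divergence has zero total divergence. -/
lemma integral_divergence_eq_zero {V : EuclideanSpace ℝ (Fin n) → EuclideanSpace ℝ (Fin n)}
    (hV : ContDiff ℝ 1 V) (hVi : Integrable V)
    (hdiv : Integrable fun x =>
      ∑ i, fderiv ℝ (fun y => V y i) x (EuclideanSpace.single i 1)) :
    ∫ x, ∑ i, fderiv ℝ (fun y => V y i) x (EuclideanSpace.single i 1) = 0 := by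
  obtain ⟨φ, K, hK, hφ, hφc, hφ1, hφK, -, hφe⟩ := exists_cutoff_seq n
  have h1 : Tendsto (fun N => ∫ x, φ N x *
      ∑ i, fderiv ℝ (fun y => V y i) x (EuclideanSpace.single i 1)) atTop
      (nhds (∫ x, ∑ i, fderiv ℝ (fun y => V y i) x (EuclideanSpace.single i 1))) := by
    refine tendsto_integral_of_dominated_convergence _
      (fun N => (hφ N).continuous.aestronglyMeasurable.mul hdiv.1) hdiv.norm
      (fun N => ae_of_all _ fun x => ?_) (ae_of_all _ fun x => ?_)
    · rw [norm_mul]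
      exact mul_le_of_le_one_left (norm_nonneg _) (hφ1 N x)
    · refine tendsto_const_nhds.congr' ((hφe x).mono fun N h => ?_)
      simp [h.1]
  have h2 : Tendsto (fun N => ∫ x, fderiv ℝ (φ N) x (V x)) atTop
      (nhds (∫ _ : EuclideanSpace ℝ (Fin n), (0 : ℝ))) := by
    refine tendsto_integral_of_dominated_convergence (fun x => K * ‖V x‖)
      (fun N => (((hφ N).continuous_fderiv one_ne_zero).clm_apply
        hV.continuous).aestronglyMeasurable) (hVi.norm.const_mul K)
      (fun N => ae_of_all _ fun x => ?_) (ae_of_all _ fun x => ?_)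
    · exact (ContinuousLinearMap.le_opNorm _ _).trans
        (mul_le_mul_of_nonneg_right (hφK N x) (norm_nonneg _))
    · refine tendsto_const_nhds.congr' ((hφe x).mono fun N h => ?_)
      simp [h.2]
  simp_rw [integral_mul_divergence (hφ _) (hφc _) hV] at h1
  simpa using tendsto_nhds_unique h1 h2.neg

/-- Evolution of the moment `∫ w q` of a density `q` obeying the conservation law
`∂ₜq + div V = 0`, for a weight `w` of controlled growth. -/
lemma moment_sub_eq_integral {q : ℝ → EuclideanSpace ℝ (Fin n) → ℝ}
    {V : ℝ → EuclideanSpace ℝ (Fin n) → EuclideanSpace ℝ (Fin n)}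
    {w r : EuclideanSpace ℝ (Fin n) → ℝ} {T C t : ℝ}
    (hq : ContDiffOn ℝ 1 (fun p : ℝ × EuclideanSpace ℝ (Fin n) => q p.1 p.2) (Icc 0 T ×ˢ univ))
    (hV : ∀ τ ∈ Ioo 0 T, ContDiff ℝ 1 (V τ))
    (hlaw : ∀ τ ∈ Ioo 0 T, ∀ x, deriv (fun σ => q σ x) τ
      + ∑ i, fderiv ℝ (fun y => V τ y i) x (EuclideanSpace.single i 1) = 0)
    (hw : ContDiff ℝ 1 w) (hwr : ∀ x, |w x| ≤ ‖x‖ * r x) (hwr' : ∀ x, ‖fderiv ℝ w x‖ ≤ r x)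
    (hwq : ∀ τ ∈ Icc 0 T, Integrable fun x => w x * q τ x)
    (hrV : ∀ τ ∈ Ioo 0 T, Integrable fun x => r x * ‖V τ x‖)
    (hC : ∀ τ ∈ Ioo 0 T, ∫ x, r x * ‖V τ x‖ ≤ C) (ht : t ∈ Icc 0 T) :
    IntervalIntegrable (fun τ => ∫ x, fderiv ℝ w x (V τ x)) volume 0 t ∧
      (∫ x, w x * q t x) - ∫ x, w x * q 0 x = ∫ τ in (0 : ℝ)..t, ∫ x, fderiv ℝ w x (V τ x) := by
  obtain ⟨φ, K, hK, hφ, hφc, hφ1, -, hφK, hφe⟩ := exists_cutoff_seq n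
  have hψ : ∀ N, ContDiff ℝ 1 fun x => φ N x * w x := fun N => (hφ N).mul hw
  have hψc : ∀ N, HasCompactSupport fun x => φ N x * w x := fun N => (hφc N).mul_right
  have hψd : ∀ N x v, fderiv ℝ (fun y => φ N y * w y) x v
      = φ N x * fderiv ℝ w x v + w x * fderiv ℝ (φ N) x v := fun N x v => by
    rw [fderiv_fun_mul ((hφ N).differentiable one_ne_zero x) (hw.differentiable one_ne_zero x)]
    simp
  have hr : ∀ x, 0 ≤ r x := fun x => (norm_nonneg _).trans (hwr' x)
  have hbound : ∀ N x v, |fderiv ℝ (fun y => φ N y * w y) x v| ≤ (1 + K) * (r x * ‖v‖) := by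
    intro N x v
    have h1 : |φ N x * fderiv ℝ w x v| ≤ r x * ‖v‖ := by
      rw [abs_mul]
      exact (mul_le_of_le_one_left (abs_nonneg _) (hφ1 N x)).trans
        ((fderiv ℝ w x).le_of_opNorm_le (hwr' x) v)
    have h2 : |w x * fderiv ℝ (φ N) x v| ≤ K * (r x * ‖v‖) := by
      rw [abs_mul]
      calc |w x| * |fderiv ℝ (φ N) x v|
          ≤ (‖x‖ * r x) * (‖fderiv ℝ (φ N) x‖ * ‖v‖) :=
            mul_le_mul (hwr x) ((fderiv ℝ (φ N) x).le_opNorm v) (abs_nonneg _)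
              (mul_nonneg (norm_nonneg _) (hr x))
        _ = (‖x‖ * ‖fderiv ℝ (φ N) x‖) * (r x * ‖v‖) := by ring
        _ ≤ K * (r x * ‖v‖) :=
            mul_le_mul_of_nonneg_right (hφK N x) (mul_nonneg (hr x) (norm_nonneg _))
    rw [hψd]
    linarith [abs_add_le (φ N x * fderiv ℝ w x v) (w x * fderiv ℝ (φ N) x v)]
  refine sub_eq_integral_of_tendsto_of_hasDerivAt (C := (1 + K) * C)
    (f := fun N τ => ∫ x, (φ N x * w x) * q τ x)
    (g := fun N τ => ∫ x, fderiv ℝ (fun y => φ N y * w y) x (V τ x))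
    (F := fun τ => ∫ x, w x * q τ x) ?_ ?_ ?_ ?_ ?_ ht
  · intro N
    refine continuousOn_integral_of_compact_support (hφc N) ?_ fun τ x _ hx => ?_
    · exact (((hψ N).continuous.comp continuous_snd).continuousOn).mul hq.continuousOn
    · simp [image_eq_zero_of_notMem_tsupport hx]
  · intro N τ hτ
    convert hasDerivAt_integral_mul_of_contDiffOn (hψ N).continuous (hψc N) hq hτ using 1
    simp_rw [fun x => eq_neg_of_add_eq_zero_left (hlaw τ hτ x), mul_neg]
    rw [integral_neg, integral_mul_divergence (hψ N) (hψc N) (hV τ hτ), neg_neg]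
  · intro N τ hτ
    calc |∫ x, fderiv ℝ (fun y => φ N y * w y) x (V τ x)|
        ≤ ∫ x, (1 + K) * (r x * ‖V τ x‖) :=
          (Real.norm_eq_abs _).symm.trans_le <| norm_integral_le_of_norm_le ((hrV τ hτ).const_mul _)
            (ae_of_all _ fun x => hbound N x _)
      _ ≤ (1 + K) * C := by
          rw [integral_const_mul]
          exact mul_le_mul_of_nonneg_left (hC τ hτ) (by positivity)
  · intro τ hτ
    have hqc : Continuous (q τ) :=
      hq.continuousOn.comp_continuous (Continuous.prodMk_right τ) fun x => ⟨hτ, mem_univ x⟩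
    refine tendsto_integral_of_dominated_convergence _
      (fun N => ((hψ N).continuous.mul hqc).aestronglyMeasurable) (hwq τ hτ).norm
      (fun N => ae_of_all _ fun x => ?_) (ae_of_all _ fun x => ?_)
    · rw [mul_assoc, norm_mul]
      exact mul_le_of_le_one_left (norm_nonneg _) (hφ1 N x)
    · refine tendsto_const_nhds.congr' ((hφe x).mono fun N h => ?_)
      simp [h.1]
  · intro τ hτ
    refine tendsto_integral_of_dominated_convergence _
      (fun N => (((hψ N).continuous_fderiv one_ne_zero).clm_apply
        (hV τ hτ).continuous).aestronglyMeasurable) ((hrV τ hτ).const_mul (1 + K))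
      (fun N => ae_of_all _ fun x => hbound N x _) (ae_of_all _ fun x => ?_)
    refine tendsto_const_nhds.congr' ((hφe x).mono fun N h => ?_)
    simp [hψd, h.1, h.2]

end Auxiliary

namespace FullEulerSolution

open Set

variable {n : ℕ} {γ cν s₁ T : ℝ} (S : FullEulerSolution n γ cν s₁ T) {t : ℝ}

/-- The pressure `p = exp(s/c_ν) ρ^γ`. -/
def pressure (t : ℝ) (x : EuclideanSpace ℝ (Fin n)) : ℝ :=
  Real.exp (S.s t x / cν) * S.ρ t x ^ γ

/-- The energy flux `((1/2)ρ|u|² + γp/(γ−1))u`. -/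
def energyFlux (t : ℝ) (x : EuclideanSpace ℝ (Fin n)) : EuclideanSpace ℝ (Fin n) :=
  ((1 / 2 : ℝ) * S.ρ t x * ‖S.u t x‖ ^ 2 + γ * S.pressure t x / (γ - 1)) • S.u t x

/-- The flux `ρuᵢu + p eᵢ` of the `i`-th momentum component. -/
def momentumFlux (i : Fin n) (t : ℝ) (x : EuclideanSpace ℝ (Fin n)) : EuclideanSpace ℝ (Fin n) :=
  (S.ρ t x * S.u t x i) • S.u t x + S.pressure t x • EuclideanSpace.single i (1 : ℝ)

lemma pressure_nonneg (ht : t ∈ Icc 0 T) (x : EuclideanSpace ℝ (Fin n)) : 0 ≤ S.pressure t x :=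
  mul_nonneg (Real.exp_pos _).le (Real.rpow_nonneg (S.ρ_nonneg t ht x) _)

lemma contDiff_slice {F : Type*} [NormedAddCommGroup F] [NormedSpace ℝ F]
    {f : ℝ → EuclideanSpace ℝ (Fin n) → F}
    (hf : ContDiffOn ℝ 1 (fun p : ℝ × EuclideanSpace ℝ (Fin n) => f p.1 p.2) (Icc 0 T ×ˢ univ))
    (ht : t ∈ Icc 0 T) : ContDiff ℝ 1 (f t) :=
  hf.comp_contDiff (contDiff_prodMk_right t) fun x => ⟨ht, mem_univ x⟩

lemma contDiff_ρ (ht : t ∈ Icc 0 T) : ContDiff ℝ 1 (S.ρ t) := contDiff_slice S.smooth_ρ ht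

lemma contDiff_u (ht : t ∈ Icc 0 T) : ContDiff ℝ 1 (S.u t) := contDiff_slice S.smooth_u ht

lemma contDiff_pressure (hγ : 1 < γ) (ht : t ∈ Icc 0 T) : ContDiff ℝ 1 (S.pressure t) :=
  (((contDiff_slice S.smooth_s ht).div_const cν).exp).mul
    ((S.contDiff_ρ ht).rpow_const_of_le (by simpa using hγ.le))

lemma integrable_pressure (ht : t ∈ Icc 0 T) : Integrable (S.pressure t) := S.int_p t ht

lemma exists_norm_u_le (ht : t ∈ Icc 0 T) : ∃ C, ∀ x, ‖S.u t x‖ ≤ C := by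
  have h := (S.decay_u t ht).eventually (ge_mem_nhds zero_lt_one)
  have hb : Bornology.IsBounded {x | ‖S.u t x‖ ≤ 1}ᶜ := Bornology.isBounded_compl_iff.2 h
  obtain ⟨C, hC⟩ := hb.isCompact_closure.exists_bound_of_continuousOn
    (S.contDiff_u ht).continuous.continuousOn
  refine ⟨max 1 C, fun x => ?_⟩
  by_cases hx : ‖S.u t x‖ ≤ 1
  · exact le_max_of_le_left hx
  · exact le_max_of_le_right (hC x (subset_closure hx))

lemma E_eq_integral (ht : t ∈ Icc 0 T) :
    S.E t = ∫ x, ((1 / 2 : ℝ) * S.ρ t x * ‖S.u t x‖ ^ 2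
        + Real.exp (S.s t x / cν) * S.ρ t x ^ γ / (γ - 1)) := by
  simp_rw [mul_assoc (1 / 2 : ℝ)]
  rw [integral_add ((S.int_ρu2 t ht).const_mul _) ((S.int_p t ht).div_const _),
    integral_const_mul, integral_div, E, Ek, Ei]
  ring

lemma Ek_nonneg (ht : t ∈ Icc 0 T) : 0 ≤ S.Ek t :=
  mul_nonneg (by norm_num) (integral_nonneg fun x =>
    mul_nonneg (S.ρ_nonneg t ht x) (sq_nonneg _))

lemma Ei_nonneg (hγ : 1 < γ) (ht : t ∈ Icc 0 T) : 0 ≤ S.Ei t :=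
  mul_nonneg (one_div_nonneg.2 (sub_nonneg.2 hγ.le)) (integral_nonneg (S.pressure_nonneg ht))

lemma integral_pressure (hγ : 1 < γ) : ∫ x, S.pressure t x = (γ - 1) * S.Ei t := by
  have : γ - 1 ≠ 0 := (sub_pos.2 hγ).ne'
  unfold Ei pressure
  field_simp

lemma integral_ρ_mul_sq_norm_u : ∫ x, S.ρ t x * ‖S.u t x‖ ^ 2 = 2 * S.Ek t := by
  unfold Ek
  ring

/-- Conservation of the total energy. -/
lemma E_eq_E_zero (hγ : 1 < γ) (ht : t ∈ Icc 0 T) : S.E t = S.E 0 := by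
  have h0 : (0 : ℝ) ∈ Icc 0 T := ⟨le_rfl, ht.1.trans ht.2⟩
  have hderiv : ∀ τ ∈ Ioo 0 T, ∫ x, deriv (fun σ => (1 / 2 : ℝ) * S.ρ σ x * ‖S.u σ x‖ ^ 2
      + Real.exp (S.s σ x / cν) * S.ρ σ x ^ γ / (γ - 1)) τ = 0 := by
    intro τ hτ
    have hτ' := Ioo_subset_Icc_self hτ
    by_cases hint : Integrable fun x => deriv (fun σ => (1 / 2 : ℝ) * S.ρ σ x * ‖S.u σ x‖ ^ 2
      + Real.exp (S.s σ x / cν) * S.ρ σ x ^ γ / (γ - 1)) τ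
    swap
    · exact integral_undef hint
    have hlaw : ∀ x, deriv (fun σ => (1 / 2 : ℝ) * S.ρ σ x * ‖S.u σ x‖ ^ 2
        + Real.exp (S.s σ x / cν) * S.ρ σ x ^ γ / (γ - 1)) τ
        = -∑ i, fderiv ℝ (fun y => S.energyFlux τ y i) x (EuclideanSpace.single i 1) :=
      fun x => eq_neg_of_add_eq_zero_left (S.energy_eq τ hτ' x)
    have hρ := S.contDiff_ρ hτ'
    have hu := S.contDiff_u hτ'
    have hp := S.contDiff_pressure hγ hτ'
    have hcoef : ContDiff ℝ 1 fun x =>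
        (1 / 2 : ℝ) * S.ρ τ x * ‖S.u τ x‖ ^ 2 + γ * S.pressure τ x / (γ - 1) :=
      ((contDiff_const.mul hρ).mul (hu.norm_sq ℝ)).add ((contDiff_const.mul hp).div_const _)
    obtain ⟨C, hC⟩ := S.exists_norm_u_le hτ'
    have hflux : Integrable (S.energyFlux τ) := by
      refine Integrable.smul_bdd (f := S.u τ) (φ := fun x => (1 / 2 : ℝ) * S.ρ τ x * ‖S.u τ x‖ ^ 2
        + γ * S.pressure τ x / (γ - 1)) ?_ C hu.continuous.aestronglyMeasurable (ae_of_all _ hC)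
      simp_rw [mul_assoc (1 / 2 : ℝ)]
      exact ((S.int_ρu2 τ hτ').const_mul _).add
        (((S.integrable_pressure hτ').const_mul _).div_const _)
    have hsmooth : ContDiff ℝ 1 (S.energyFlux τ) := hcoef.smul hu
    simp_rw [hlaw] at hint ⊢
    rw [integral_neg, integral_divergence_eq_zero hsmooth hflux (by simpa using hint.fun_neg),
      neg_zero]
  have hcont : ContinuousOn (fun τ => ∫ x, ((1 / 2 : ℝ) * S.ρ τ x * ‖S.u τ x‖ ^ 2
        + Real.exp (S.s τ x / cν) * S.ρ τ x ^ γ / (γ - 1))) (Icc 0 T) :=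
    fun τ hτ => (S.hE τ hτ).continuousAt.continuousWithinAt
  have h := (sub_eq_integral_of_tendsto_of_hasDerivAt (G := fun _ => 0) (g := fun _ _ => 0)
    (fun _ : ℕ => hcont)
    (fun _ τ hτ => hderiv τ hτ ▸ S.hE τ (Ioo_subset_Icc_self hτ)) (C := 0) (by simp)
    (fun _ _ => tendsto_const_nhds) (fun _ _ => tendsto_const_nhds) ht).2
  rw [S.E_eq_integral ht, S.E_eq_integral h0, ← sub_eq_zero, h]
  simp

/-- The virial bound `∫ ρ|u||x| ≤ G + E_k`. -/
lemma integral_norm_momentum_le (ht : t ∈ Icc 0 T) :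
    ∫ x, ‖x‖ * ‖S.ρ t x • S.u t x‖ ≤ S.G t + S.Ek t := by
  have h : ∀ x, ‖x‖ * ‖S.ρ t x • S.u t x‖
      ≤ (1 / 2 : ℝ) * (S.ρ t x * ‖x‖ ^ 2) + (1 / 2 : ℝ) * (S.ρ t x * ‖S.u t x‖ ^ 2) := fun x => by
    have hρ := S.ρ_nonneg t ht x
    rw [norm_smul, Real.norm_of_nonneg hρ]
    nlinarith [mul_nonneg hρ (sq_nonneg (‖x‖ - ‖S.u t x‖))]
  have i1 := (S.int_ρx2 t ht).const_mul (1 / 2 : ℝ)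
  have i2 := (S.int_ρu2 t ht).const_mul (1 / 2 : ℝ)
  rw [G, Ek, ← integral_const_mul, ← integral_const_mul, ← integral_add i1 i2]
  exact integral_mono_of_nonneg (ae_of_all _ fun x => by positivity) (i1.add i2) (ae_of_all _ h)

/-- `G' = F` in integrated form. -/
lemma G_sub_eq_integral (hγ : 1 < γ) (ht : t ∈ Icc 0 T) :
    IntervalIntegrable S.F volume 0 t ∧ S.G t - S.G 0 = ∫ τ in (0 : ℝ)..t, S.F τ := by
  have hw : ContDiff ℝ 1 fun x : EuclideanSpace ℝ (Fin n) => (1 / 2 : ℝ) * ‖x‖ ^ 2 :=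
    contDiff_const.mul (contDiff_norm_sq ℝ)
  have hfd : ∀ x v : EuclideanSpace ℝ (Fin n),
      fderiv ℝ (fun y : EuclideanSpace ℝ (Fin n) => (1 / 2 : ℝ) * ‖y‖ ^ 2) x v = ⟪x, v⟫_ℝ := by
    intro x v
    rw [(((hasStrictFDerivAt_norm_sq x).hasFDerivAt).const_mul (1 / 2 : ℝ)).fderiv]
    simp
  obtain ⟨C, hC⟩ := isCompact_Icc.exists_bound_of_continuousOn (s := Icc 0 T) (f := S.G)
    fun τ hτ => (S.hG τ hτ).continuousAt.continuousWithinAt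
  have key := moment_sub_eq_integral (q := S.ρ) (V := fun τ x => S.ρ τ x • S.u τ x) (T := T)
    (w := fun x => (1 / 2 : ℝ) * ‖x‖ ^ 2) (r := fun x => ‖x‖) (C := C + S.E 0) (t := t) S.smooth_ρ
    (fun τ hτ => (S.contDiff_ρ (Ioo_subset_Icc_self hτ)).smul
      (S.contDiff_u (Ioo_subset_Icc_self hτ)))
    (fun τ hτ x => S.mass_eq τ (Ioo_subset_Icc_self hτ) x) hw
    (fun x => by
      rw [abs_of_nonneg (by positivity)]
      nlinarith [sq_nonneg ‖x‖])
    (fun x => ContinuousLinearMap.opNorm_le_bound _ (norm_nonneg _) fun v => by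
      rw [hfd]
      exact norm_inner_le_norm x v)
    (fun τ hτ => by
      convert (S.int_ρx2 τ hτ).const_mul (1 / 2 : ℝ) using 2
      ring)
    (fun τ hτ => by
      have hτ' := Ioo_subset_Icc_self hτ
      convert S.int_ρux τ hτ' using 2 with x
      rw [norm_smul, Real.norm_of_nonneg (S.ρ_nonneg τ hτ' x)]
      ring)
    (fun τ hτ => by
      have hτ' := Ioo_subset_Icc_self hτ
      have hG := (le_abs_self _).trans (hC τ hτ')
      have hE := S.E_eq_E_zero hγ hτ'
      have hEi := S.Ei_nonneg hγ hτ'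
      rw [E] at hE
      linarith [S.integral_norm_momentum_le hτ'])
    ht
  have hF : ∀ τ, ∫ x, fderiv ℝ (fun y : EuclideanSpace ℝ (Fin n) => (1 / 2 : ℝ) * ‖y‖ ^ 2) x
      (S.ρ τ x • S.u τ x) = S.F τ := fun τ => by
    simp_rw [hfd, inner_smul_right, fun x => real_inner_comm (S.u τ x) x]
    rfl
  have hG : ∀ τ, ∫ x, (1 / 2 : ℝ) * ‖x‖ ^ 2 * S.ρ τ x = S.G τ := fun τ => by
    rw [G, ← integral_const_mul]
    congr with x
    ring
  simpa only [hF, hG] using key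

lemma integrable_momentum_component (ht : t ∈ Icc 0 T) (i : Fin n) :
    Integrable fun x => x i * (S.ρ t x * S.u t x i) := by
  have hρ := (S.contDiff_ρ ht).continuous
  have hu := (S.contDiff_u ht).continuous
  refine (S.int_ρux t ht).mono' (by fun_prop) (ae_of_all _ fun x => ?_)
  rw [norm_mul, norm_mul, Real.norm_of_nonneg (S.ρ_nonneg t ht x)]
  have h1 := PiLp.norm_apply_le x i
  have h2 := PiLp.norm_apply_le (S.u t x) i
  calc ‖x i‖ * (S.ρ t x * ‖S.u t x i‖) ≤ ‖x‖ * (S.ρ t x * ‖S.u t x‖) := by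
        have := S.ρ_nonneg t ht x
        gcongr
    _ = _ := by ring

lemma F_eq_sum (ht : t ∈ Icc 0 T) :
    S.F t = ∑ i, ∫ x, x i * (S.ρ t x * S.u t x i) := by
  rw [← integral_finsetSum _ fun i _ => S.integrable_momentum_component ht i, F]
  congr with x
  rw [PiLp.inner_apply, Finset.mul_sum]
  refine Finset.sum_congr rfl fun i _ => ?_
  simp
  ring

lemma norm_momentumFlux_le (ht : t ∈ Icc 0 T) (i : Fin n) (x : EuclideanSpace ℝ (Fin n)) :
    ‖S.momentumFlux i t x‖ ≤ S.ρ t x * ‖S.u t x‖ ^ 2 + S.pressure t x := by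
  have hρ := S.ρ_nonneg t ht x
  refine (norm_add_le _ _).trans (add_le_add ?_ ?_)
  · rw [norm_smul, norm_mul, Real.norm_of_nonneg hρ, sq, ← mul_assoc]
    gcongr
    exact PiLp.norm_apply_le _ i
  · simp [norm_smul, abs_of_nonneg (S.pressure_nonneg ht x)]

lemma contDiff_momentumFlux (hγ : 1 < γ) (ht : t ∈ Icc 0 T) (i : Fin n) :
    ContDiff ℝ 1 (S.momentumFlux i t) := by
  have hρ := S.contDiff_ρ ht
  have hu := S.contDiff_u ht
  have hp := S.contDiff_pressure hγ ht
  have hui : ContDiff ℝ 1 fun x => S.u t x i := by fun_prop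
  exact ((hρ.mul hui).smul hu).add (hp.smul contDiff_const)

lemma divergence_momentumFlux (hγ : 1 < γ) (ht : t ∈ Icc 0 T) (i : Fin n)
    (x : EuclideanSpace ℝ (Fin n)) :
    ∑ j, fderiv ℝ (fun y => S.momentumFlux i t y j) x (EuclideanSpace.single j 1)
      = ∑ j, fderiv ℝ (fun y => S.ρ t y * S.u t y i * S.u t y j) x (EuclideanSpace.single j 1)
        + fderiv ℝ (S.pressure t) x (EuclideanSpace.single i 1) := by
  have hρ := S.contDiff_ρ ht
  have hu := S.contDiff_u ht
  have hp := (S.contDiff_pressure hγ ht).differentiable one_ne_zero x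
  have hui : ∀ j, ContDiff ℝ 1 fun x => S.u t x j := fun j => by fun_prop
  have hj : ∀ j, fderiv ℝ (fun y => S.momentumFlux i t y j) x (EuclideanSpace.single j 1)
      = fderiv ℝ (fun y => S.ρ t y * S.u t y i * S.u t y j) x (EuclideanSpace.single j 1)
        + if j = i then fderiv ℝ (S.pressure t) x (EuclideanSpace.single j 1) else 0 := by
    intro j
    have : (fun y => S.momentumFlux i t y j) = fun y => S.ρ t y * S.u t y i * S.u t y j
        + S.pressure t y * (if j = i then 1 else 0) := by
      ext y
      simp [momentumFlux]
    rw [this, fderiv_fun_add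
      (((hρ.mul (hui i)).mul (hui j)).differentiable one_ne_zero x) (hp.mul_const _),
      fderiv_mul_const hp]
    split_ifs <;> simp
  simp_rw [hj, Finset.sum_add_distrib]
  simp

/-- `F' = 2 E_k + n(γ−1) E_i` in integrated form. -/
lemma F_sub_eq_integral (hγ : 1 < γ) (ht : t ∈ Icc 0 T) :
    IntervalIntegrable (fun τ => 2 * S.Ek τ + n * (γ - 1) * S.Ei τ) volume 0 t ∧
      S.F t - S.F 0 = ∫ τ in (0 : ℝ)..t, (2 * S.Ek τ + n * (γ - 1) * S.Ei τ) := by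
  have h0 : (0 : ℝ) ∈ Icc 0 T := ⟨le_rfl, ht.1.trans ht.2⟩
  have hfd : ∀ (i : Fin n) (x v : EuclideanSpace ℝ (Fin n)),
      fderiv ℝ (fun y : EuclideanSpace ℝ (Fin n) => y i) x v = v i := fun i x v => by
    rw [show (fun y : EuclideanSpace ℝ (Fin n) => y i)
      = (EuclideanSpace.proj i : EuclideanSpace ℝ (Fin n) →L[ℝ] ℝ) from rfl,
      ContinuousLinearMap.fderiv]
    rfl
  have hdom : ∀ τ ∈ Icc 0 T,
      Integrable fun x => S.ρ τ x * ‖S.u τ x‖ ^ 2 + S.pressure τ x :=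
    fun τ hτ => (S.int_ρu2 τ hτ).add (S.int_p τ hτ)
  have hflux : ∀ i, ∀ τ ∈ Icc 0 T, Integrable (S.momentumFlux i τ) := fun i τ hτ =>
    (hdom τ hτ).mono' (S.contDiff_momentumFlux hγ hτ i).continuous.aestronglyMeasurable
      (ae_of_all _ (S.norm_momentumFlux_le hτ i))
  have key : ∀ i, _ := fun i => moment_sub_eq_integral
    (q := fun τ x => S.ρ τ x * S.u τ x i) (V := S.momentumFlux i) (T := T)
    (w := fun x => x i) (r := fun _ => 1) (C := (2 + (γ - 1)) * S.E 0) (t := t)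
    (S.smooth_ρ.mul ((EuclideanSpace.proj i : EuclideanSpace ℝ (Fin n) →L[ℝ]
      ℝ).contDiff.comp_contDiffOn S.smooth_u))
    (fun τ hτ => S.contDiff_momentumFlux hγ (Ioo_subset_Icc_self hτ) i)
    (fun τ hτ x => by
      have hτ' := Ioo_subset_Icc_self hτ
      rw [S.divergence_momentumFlux hγ hτ', ← add_assoc]
      exact S.momentum_eq τ hτ' x i)
    (by fun_prop)
    (fun x => by simpa using PiLp.norm_apply_le x i)
    (fun x => ContinuousLinearMap.opNorm_le_bound _ zero_le_one fun v => by
      rw [hfd, one_mul]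
      exact PiLp.norm_apply_le v i)
    (fun τ hτ => S.integrable_momentum_component hτ i)
    (fun τ hτ => by simpa using (hflux i τ (Ioo_subset_Icc_self hτ)).norm)
    (fun τ hτ => by
      have hτ' := Ioo_subset_Icc_self hτ
      have hle := integral_mono (hflux i τ hτ').norm (hdom τ hτ')
        (S.norm_momentumFlux_le hτ' i)
      rw [integral_add (S.int_ρu2 τ hτ') (S.integrable_pressure hτ'),
        integral_ρ_mul_sq_norm_u, S.integral_pressure hγ] at hle
      simp only [one_mul]
      rw [← S.E_eq_E_zero hγ hτ', E]
      have h1 := mul_nonneg (sub_pos.2 hγ).le (S.Ek_nonneg hτ')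
      linarith [S.Ei_nonneg hγ hτ'])
    ht
  simp only [hfd] at key
  have hsum : ∀ τ ∈ Icc 0 T, ∑ i, ∫ x, S.momentumFlux i τ x i
      = 2 * S.Ek τ + n * (γ - 1) * S.Ei τ := by
    intro τ hτ
    have hcomp : ∀ i, Integrable fun x => S.momentumFlux i τ x i := fun i =>
      (EuclideanSpace.proj i : EuclideanSpace ℝ (Fin n) →L[ℝ] ℝ).integrable_comp (hflux i τ hτ)
    rw [← integral_finsetSum _ fun i _ => hcomp i]
    have hpt : ∀ x, ∑ i, S.momentumFlux i τ x i
        = S.ρ τ x * ‖S.u τ x‖ ^ 2 + n * S.pressure τ x := fun x => by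
      simp [momentumFlux, Finset.sum_add_distrib, EuclideanSpace.real_norm_sq_eq, Finset.mul_sum]
      exact Finset.sum_congr rfl fun i _ => by ring
    simp_rw [hpt]
    rw [integral_add (S.int_ρu2 τ hτ) ((S.integrable_pressure hτ).const_mul _), integral_const_mul,
      integral_ρ_mul_sq_norm_u, S.integral_pressure hγ]
    ring
  have hsum' : EqOn (fun τ => ∑ i, ∫ x, S.momentumFlux i τ x i)
      (fun τ => 2 * S.Ek τ + n * (γ - 1) * S.Ei τ) (uIcc 0 t) := fun τ hτ => by
    rw [uIcc_of_le ht.1] at hτ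
    exact hsum τ ⟨hτ.1, hτ.2.trans ht.2⟩
  refine ⟨?_, ?_⟩
  · refine (IntervalIntegrable.sum Finset.univ fun i _ => (key i).1).congr fun τ hτ => ?_
    rw [Finset.sum_apply]
    exact hsum' (uIoc_subset_uIcc hτ)
  · rw [← intervalIntegral.integral_congr hsum',
      intervalIntegral.integral_finsetSum fun i _ => (key i).1, S.F_eq_sum ht, S.F_eq_sum h0,
      ← Finset.sum_sub_distrib]
    exact Finset.sum_congr rfl fun i _ => (key i).2

/-- Two integrations of bounds on `F'`. -/
lemma inertia_bounds_of_le (hγ : 1 < γ) {a b : ℝ}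
    (hab : ∀ τ ∈ Icc 0 T, 2 * a ≤ 2 * S.Ek τ + n * (γ - 1) * S.Ei τ ∧
      2 * S.Ek τ + n * (γ - 1) * S.Ei τ ≤ 2 * b) (ht : t ∈ Icc 0 T) :
    a * t ^ 2 + S.F 0 * t + S.G 0 ≤ S.G t ∧ S.G t ≤ b * t ^ 2 + S.F 0 * t + S.G 0 := by
  have hF : ∀ τ ∈ Icc 0 T, S.F 0 + 2 * a * τ ≤ S.F τ ∧ S.F τ ≤ S.F 0 + 2 * b * τ := by
    intro τ hτ
    obtain ⟨hint, heq⟩ := S.F_sub_eq_integral hγ hτ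
    have h1 := intervalIntegral.integral_mono_on hτ.1 intervalIntegrable_const hint
      fun σ hσ => (hab σ ⟨hσ.1, hσ.2.trans hτ.2⟩).1
    have h2 := intervalIntegral.integral_mono_on hτ.1 hint intervalIntegrable_const
      fun σ hσ => (hab σ ⟨hσ.1, hσ.2.trans hτ.2⟩).2
    rw [intervalIntegral.integral_const, smul_eq_mul] at h1 h2
    constructor <;> linarith
  obtain ⟨hint, heq⟩ := S.G_sub_eq_integral hγ ht
  have hlin : ∀ c : ℝ, IntervalIntegrable (fun τ => S.F 0 + 2 * c * τ) volume 0 t := fun c =>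
    Continuous.intervalIntegrable (by fun_prop) _ _
  have hval : ∀ c : ℝ, ∫ τ in (0 : ℝ)..t, (S.F 0 + 2 * c * τ) = S.F 0 * t + c * t ^ 2 := by
    intro c
    rw [intervalIntegral.integral_add intervalIntegrable_const
      (Continuous.intervalIntegrable (by fun_prop) _ _), intervalIntegral.integral_const_mul,
      integral_id, intervalIntegral.integral_const, smul_eq_mul]
    ring
  have h1 := intervalIntegral.integral_mono_on ht.1 (hlin a) hint
    fun σ hσ => (hF σ ⟨hσ.1, hσ.2.trans ht.2⟩).1
  have h2 := intervalIntegral.integral_mono_on ht.1 hint (hlin b)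
    fun σ hσ => (hF σ ⟨hσ.1, hσ.2.trans ht.2⟩).2
  rw [hval] at h1 h2
  constructor <;> linarith

end FullEulerSolution

/-- **Lemma 3.3, full Euler case: two-sided bounds on the momentum of inertia.**
If `1 < γ ≤ 1 + 2/n` then
`(n(γ−1)/2) E(0) t² + F(0) t + G(0) ≤ G(t) ≤ E(0) t² + F(0) t + G(0)`,
while if `γ > 1 + 2/n` then
`E(0) t² + F(0) t + G(0) ≤ G(t) ≤ (n(γ−1)/2) E(0) t² + F(0) t + G(0)`. -/
theorem FullEulerSolution.inertia_two_sided_bounds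
    {n : ℕ} {γ cν s₁ T : ℝ} (hn : 1 ≤ n) (hγ : 1 < γ) (hcν : 0 < cν) (hT : 0 < T)
    (S : FullEulerSolution n γ cν s₁ T) :
    (γ ≤ 1 + 2 / n →
      ∀ t ∈ Set.Icc 0 T,
        ((n : ℝ) * (γ - 1) / 2) * S.E 0 * t ^ 2 + S.F 0 * t + S.G 0 ≤ S.G t ∧
        S.G t ≤ S.E 0 * t ^ 2 + S.F 0 * t + S.G 0) ∧
    (1 + 2 / n < γ →
      ∀ t ∈ Set.Icc 0 T,
        S.E 0 * t ^ 2 + S.F 0 * t + S.G 0 ≤ S.G t ∧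
        S.G t ≤ ((n : ℝ) * (γ - 1) / 2) * S.E 0 * t ^ 2 + S.F 0 * t + S.G 0) := by
  have hn0 : (0 : ℝ) < n := by exact_mod_cast hn
  have hEk := fun τ (hτ : τ ∈ Set.Icc 0 T) => S.Ek_nonneg hτ
  have hEi := fun τ (hτ : τ ∈ Set.Icc 0 T) => S.Ei_nonneg hγ hτ
  have hE : ∀ τ ∈ Set.Icc 0 T, S.Ek τ + S.Ei τ = S.E 0 := fun τ hτ => S.E_eq_E_zero hγ hτ
  refine ⟨fun h t ht => S.inertia_bounds_of_le hγ (fun τ hτ => ?_) ht,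
    fun h t ht => S.inertia_bounds_of_le hγ (fun τ hτ => ?_) ht⟩
  · have h2 : n * (γ - 1) ≤ 2 := by
      rw [← sub_le_iff_le_add', le_div_iff₀ hn0] at h
      linarith
    rw [← hE τ hτ]
    constructor <;> nlinarith [hEk τ hτ, hEi τ hτ]
  · have h2 : 2 < n * (γ - 1) := by
      rw [← lt_sub_iff_add_lt', div_lt_iff₀ hn0] at h
      linarith
    rw [← hE τ hτ]
    constructor <;> nlinarith [hEk τ hτ, hEi τ hτ]
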